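/- arXiv:2505.22104 — 11 statements merged into one kernel-verified Lean document; each statement's English description precedes it below -/
import Mathlib

section
/- Let (X, U, W, f) be a control system and G ⊆ X a safe set. Define D : X → Set U by D(x) = ⋃ { C(x) | C is a nonblocking safety controller for Safety(G) }. Then D is itself a nonblocking safety controller for Safety(G), and every nonblocking safety controller C for Safety(G) satisfies C ⊑ D. Consequently, the nonblocking, maximally permissive safety controller for Safety(G) exists and is unique. -/
/-!
For a nonblocking controller, every state on a path from the domain is again in the domain, so
such a controller is safe exactly when its domain is contained in `G`
(`isSafetyController_iff_ctrlDom_subset`). The domain of a pointwise union is the union of the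
domains, so both the nonblocking property and the inclusion of the domain in `G` pass to the union.
The union is thus the greatest nonblocking safety controller for the pointwise order, and a greatest
element is unique by antisymmetry.
-/

/-- The domain of a state-feedback controller: states where it allows some input. -/
def ctrlDom {X U : Type*} (C : X → Set U) : Set X := {x | (C x).Nonempty}

/-- `ρ 0, ρ 1, …, ρ k` is a finite `C`-path: each step follows the dynamics `f`
under some control input allowed by `C` and some disturbance. -/
def IsFinPath {X U W : Type*} (f : X → U → W → X) (C : X → Set U) (k : ℕ) (ρ : ℕ → X) : Prop :=
  ∀ i < k, ∃ u ∈ C (ρ i), ∃ w : W, ρ (i + 1) = f (ρ i) u w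

/-- `C` is a safety controller for `Safety(G)`: every state on every finite
`C`-path starting in `dom C` lies in `G`. -/
def IsSafetyController {X U W : Type*} (f : X → U → W → X) (C : X → Set U) (G : Set X) : Prop :=
  ∀ (ρ : ℕ → X) (k : ℕ), ρ 0 ∈ ctrlDom C → IsFinPath f C k ρ → ∀ i ≤ k, ρ i ∈ G

/-- `C` is nonblocking: allowed inputs keep the system inside `dom C`
under every disturbance. -/
def Nonblocking {X U W : Type*} (f : X → U → W → X) (C : X → Set U) : Prop :=
  ∀ x ∈ ctrlDom C, ∀ u ∈ C x, ∀ w : W, f x u w ∈ ctrlDom C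

/-- `C` is the nonblocking, maximally permissive (n.m.p.) safety controller for
`Safety(G)`: it is a nonblocking safety controller and a super-controller of every
nonblocking safety controller for `Safety(G)`. -/
def IsNMPSafetyController {X U W : Type*} (f : X → U → W → X) (C : X → Set U) (G : Set X) : Prop :=
  Nonblocking f C ∧ IsSafetyController f C G ∧
    ∀ C' : X → Set U, Nonblocking f C' → IsSafetyController f C' G → ∀ x, C' x ⊆ C x

theorem isSafetyController_iff_ctrlDom_subset {X U W : Type*} {f : X → U → W → X}
    {C : X → Set U} {G : Set X} (hC : Nonblocking f C) :
    IsSafetyController f C G ↔ ctrlDom C ⊆ G := by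
  constructor
  · intro h x hx
    -- A state of the domain is a path of length zero.
    exact h (fun _ => x) 0 hx (fun i hi => absurd hi (Nat.not_lt_zero i)) 0 le_rfl
  · intro h ρ k h0 hρ i hi
    have mem_dom : ∀ j ≤ k, ρ j ∈ ctrlDom C := by
      intro j
      induction j with
      | zero => exact fun _ => h0
      | succ j ih =>
        intro hj
        obtain ⟨u, hu, w, hw⟩ := hρ j hj
        rw [hw]
        exact hC _ (ih (Nat.le_of_succ_le hj)) u hu w
    exact h (mem_dom i hi)

/-- the pointwise union of all nonblocking safety controllers is itself a
nonblocking safety controller and a super-controller of each of them; hence the n.m.p.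
safety controller exists and is unique. -/
theorem nmp_safety_controller_exists_unique
    {X U W : Type*} [Nonempty X] [Nonempty U] [Nonempty W]
    (f : X → U → W → X) (G : Set X) :
    (let D : X → Set U := fun x =>
      ⋃ C ∈ {C : X → Set U | Nonblocking f C ∧ IsSafetyController f C G}, C x
     Nonblocking f D ∧ IsSafetyController f D G ∧
      ∀ C : X → Set U, Nonblocking f C → IsSafetyController f C G → ∀ x, C x ⊆ D x) ∧
    (∃! Cstar : X → Set U, IsNMPSafetyController f Cstar G) := by
  have hmain : IsNMPSafetyController f (fun x =>
      ⋃ C ∈ {C : X → Set U | Nonblocking f C ∧ IsSafetyController f C G}, C x) G := by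
    have hsup : ∀ C : X → Set U, Nonblocking f C → IsSafetyController f C G → ∀ x,
        C x ⊆ ⋃ C ∈ {C : X → Set U | Nonblocking f C ∧ IsSafetyController f C G}, C x :=
      fun C hn hs x u hu => Set.mem_biUnion (show C ∈ {C : X → Set U | _} from ⟨hn, hs⟩) hu
    have hnb : Nonblocking f (fun x =>
        ⋃ C ∈ {C : X → Set U | Nonblocking f C ∧ IsSafetyController f C G}, C x) := by
      intro x _ u hu w
      obtain ⟨C, ⟨hn, hs⟩, huC⟩ := Set.mem_iUnion₂.mp hu
      exact (hn x ⟨u, huC⟩ u huC w).mono (hsup C hn hs _)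
    refine ⟨hnb, (isSafetyController_iff_ctrlDom_subset hnb).mpr ?_, hsup⟩
    rintro x ⟨u, hu⟩
    obtain ⟨C, ⟨hn, hs⟩, huC⟩ := Set.mem_iUnion₂.mp hu
    exact (isSafetyController_iff_ctrlDom_subset hn).mp hs ⟨u, huC⟩
  refine ⟨hmain, _, hmain, fun C hC => funext fun x => ?_⟩
  exact (hmain.2.2 C hC.1 hC.2.1 x).antisymm (hC.2.2 _ hmain.1 hmain.2.1 x)
end

section
/- Let (X, U, W, f) be a control system, G ⊆ X a safe set, and C* an n.m.p. safety controller for Safety(G). Then for every x ∈ dom C* and every control input u ∈ U with u ∉ C*(x), there exists a disturbance w ∈ W such that f(x,u,w) ∉ dom C*. (Every input disallowed by the n.m.p. controller can be pushed outside its domain by some disturbance.) -/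
/-- The invariance controller of `D`: at states of `D` it allows exactly the inputs that keep the
system in `D` under every disturbance; elsewhere it allows nothing. -/
def invCtrl {X U W : Type*} (f : X → U → W → X) (D : Set X) : X → Set U :=
  fun y => {v | y ∈ D ∧ ∀ w : W, f y v w ∈ D}

/-- every input disallowed by the n.m.p. safety controller can be pushed
outside its domain by some disturbance. -/
theorem nmp_disallowed_input_escapes
    {X U W : Type*} [Nonempty X] [Nonempty U] [Nonempty W]
    (f : X → U → W → X) (G : Set X) (Cstar : X → Set U)
    (hC : IsNMPSafetyController f Cstar G) :
    ∀ x ∈ ctrlDom Cstar, ∀ u : U, u ∉ Cstar x →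
      ∃ w : W, f x u w ∉ ctrlDom Cstar := by
  obtain ⟨hnb, hsafe, hmax⟩ := hC
  intro x hx u hu
  by_contra! h
  -- An input that cannot escape is allowed by the invariance controller of `ctrlDom Cstar`, so it
  -- suffices that this controller is nonblocking and safe: maximality then puts `u` in `Cstar x`.
  refine hu (hmax (invCtrl f (ctrlDom Cstar)) ?_ ?_ x ⟨hx, h⟩)
  · rintro y - v ⟨-, hv⟩ w
    obtain ⟨v', hv'⟩ := hv w
    exact ⟨v', hv w, hnb _ (hv w) v' hv'⟩
  · intro ρ k h0 hρ i hi
    have hdom : ∀ j ≤ k, ρ j ∈ ctrlDom Cstar := by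
      intro j hj
      induction j with
      | zero => exact h0.elim fun _ hv => hv.1
      | succ j _ =>
        obtain ⟨v, hv, w, hw⟩ := hρ j hj
        exact hw ▸ hv.2 w
    -- States of `ctrlDom Cstar` are safe because of the `Cstar`-path of length zero.
    exact hsafe (fun _ => ρ i) 0 (hdom i hi) (fun j hj => absurd hj (Nat.not_lt_zero j)) 0 le_rfl
end

section
/- (Theorem 1, safety half.) Let (X, U, W, f) be a control system, G ⊆ X a safe set, and C* an n.m.p. safety controller for Safety(G). Let S : X × U → U be a shield with domain D ⊆ X such that D ⊆ G and D is invariant under shielded transitions, i.e., for every x ∈ D, u ∈ U, w ∈ W one has f(x, S(x,u), w) ∈ D. If D = dom C*, then for every x ∈ D and every u ∈ U, the shield's output satisfies S(x,u) ∈ C*(x). -/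
/-- The controller induced by a shield `S` with domain `D`: the possible shield outputs on `D`,
and no input outside `D`. -/
def shieldCtrl {X U : Type*} (S : X → U → U) (D : Set X) (x : X) : Set U :=
  {u | x ∈ D ∧ ∃ v, u = S x v}

/-- Theorem 1, safety half: if a shield with domain `D = dom C*` keeps the
system in `D ⊆ G` under shielded transitions, then its output is always allowed by the
n.m.p. safety controller `C*`. -/
theorem shield_output_in_nmp_controller
    {X U W : Type*} [Nonempty X] [Nonempty U] [Nonempty W]
    (f : X → U → W → X) (G : Set X) (Cstar : X → Set U)
    (hC : IsNMPSafetyController f Cstar G)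
    (S : X → U → U) (D : Set X)
    (hDG : D ⊆ G)
    (hinv : ∀ x ∈ D, ∀ u : U, ∀ w : W, f x (S x u) w ∈ D)
    (hdom : D = ctrlDom Cstar) :
    ∀ x ∈ D, ∀ u : U, S x u ∈ Cstar x := by
  have mem_D : ∀ x ∈ ctrlDom (shieldCtrl S D), x ∈ D := fun _ ⟨_, hx, _⟩ => hx
  have step : ∀ x, ∀ u ∈ shieldCtrl S D x, ∀ w, f x u w ∈ D := by
    rintro x _ ⟨hx, v, rfl⟩ w
    exact hinv x hx v w
  have nonblocking : Nonblocking f (shieldCtrl S D) := fun x _ u hu w =>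
    ⟨S (f x u w) u, step x u hu w, u, rfl⟩
  have safe : IsSafetyController f (shieldCtrl S D) G := by
    intro ρ k h0 hρ i hi
    apply hDG
    cases i with
    | zero => exact mem_D _ h0
    | succ i =>
      obtain ⟨u, hu, w, hw⟩ := hρ i hi
      exact hw ▸ step _ u hu w
  intro x hx u
  exact hC.2.2 _ nonblocking safe x ⟨hx, u, rfl⟩
end

section
/- (Theorem 1, converse / soundness of the shield construction.) Let (X, U, W, f) be a control system, G ⊆ X a safe set, and C* an n.m.p. safety controller for Safety(G). Let S : X × U → U satisfy, for every x ∈ dom C* and u ∈ U: S(x,u) = u if u ∈ C*(x), and S(x,u) ∈ C*(x) otherwise. Then for every learned controller C̄ (an arbitrary function from finite nonempty sequences of states to U), every x0 ∈ dom C*, and every disturbance sequence w0, w1, … ∈ W, the shielded trajectory defined by x_{i+1} = f(x_i, S(x_i, C̄(x0 … x_i)), w_i) satisfies x_i ∈ dom C* and x_i ∈ G for all i ≥ 0. -/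
/-- Theorem 1, converse / soundness: the shield built from an n.m.p.
safety controller keeps every shielded trajectory, for any learned controller
`Cbar : List X → U` and any disturbance sequence, inside `dom C*` and inside `G`. -/
theorem shield_construction_sound
    {X U W : Type*} [Nonempty X] [Nonempty U] [Nonempty W]
    (f : X → U → W → X) (G : Set X) (Cstar : X → Set U)
    (hC : IsNMPSafetyController f Cstar G)
    (S : X → U → U)
    (hS : ∀ x ∈ ctrlDom Cstar, ∀ u : U,
      (u ∈ Cstar x → S x u = u) ∧ (u ∉ Cstar x → S x u ∈ Cstar x))
    (Cbar : List X → U) (x0 : X) (hx0 : x0 ∈ ctrlDom Cstar)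
    (w : ℕ → W) (ρ : ℕ → X) (hρ0 : ρ 0 = x0)
    (hstep : ∀ i : ℕ,
      ρ (i + 1) = f (ρ i) (S (ρ i) (Cbar ((List.range (i + 1)).map ρ))) (w i)) :
    ∀ i : ℕ, ρ i ∈ ctrlDom Cstar ∧ ρ i ∈ G := by
  -- The shield's output is always an input allowed by `Cstar`.
  have hmem : ∀ x ∈ ctrlDom Cstar, ∀ u, S x u ∈ Cstar x := fun x hx u => by
    by_cases hu : u ∈ Cstar x
    · exact ((hS x hx u).1 hu).symm ▸ hu
    · exact (hS x hx u).2 hu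
  have hdom : ∀ i, ρ i ∈ ctrlDom Cstar := fun i => by
    induction i with
    | zero => exact hρ0 ▸ hx0
    | succ i ih => exact hstep i ▸ hC.1 _ ih _ (hmem _ ih _) _
  -- A state in the domain is a path of length zero, so it is safe.
  exact fun i => ⟨hdom i, hC.2.1 (fun _ => ρ i) 0 (hdom i)
    (fun j hj => absurd hj (Nat.not_lt_zero j)) 0 le_rfl⟩
end

section
/- Let (X, U, W, f) be a control system, let G, H ⊆ X be safe sets, let C_G be a safety controller for Safety(G) and C_H a safety controller for Safety(H). Then the product controller C_G ⊗ C_H, defined by (C_G ⊗ C_H)(x) = C_G(x) ∩ C_H(x), is a safety controller for Safety(G ∩ H). -/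
/-- the product of safety controllers for `Safety(G)` and `Safety(H)` is a
safety controller for `Safety(G ∩ H)`. -/
theorem product_controller_safety
    {X U W : Type*} [Nonempty X] [Nonempty U] [Nonempty W]
    (f : X → U → W → X) (G H : Set X) (CG CH : X → Set U)
    (hG : IsSafetyController f CG G) (hH : IsSafetyController f CH H) :
    IsSafetyController f (fun x => CG x ∩ CH x) (G ∩ H) := by
  -- Every path of the product controller is a path of each factor, with the same initial state.
  intro ρ k ⟨u, huG, huH⟩ hρ i hi
  refine ⟨hG ρ k ⟨u, huG⟩ (fun j hj => ?_) i hi, hH ρ k ⟨u, huH⟩ (fun j hj => ?_) i hi⟩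
  · obtain ⟨v, hv, w, hw⟩ := hρ j hj
    exact ⟨v, hv.1, w, hw⟩
  · obtain ⟨v, hv, w, hw⟩ := hρ j hj
    exact ⟨v, hv.2, w, hw⟩
end

section
/- (Theorem 2, 'if' direction.) Let (X, U, W, f) be a control system, G, H ⊆ X safe sets, and let C*_G and C*_H be n.m.p. safety controllers for Safety(G) and Safety(H) respectively. Then every nonblocking sub-controller of the product C*_G ⊗ C*_H is a nonblocking safety controller for Safety(G ∩ H). -/
/-- Safety passes to sub-controllers: a path of the smaller controller, starting in its domain,
is a path of the larger one starting in the larger domain. -/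
theorem IsSafetyController.mono {X U W : Type*} {f : X → U → W → X} {C C' : X → Set U} {G : Set X}
    (h : IsSafetyController f C G) (hsub : ∀ x, C' x ⊆ C x) : IsSafetyController f C' G := by
  intro ρ k h0 hρ
  refine h ρ k (h0.mono (hsub _)) fun i hi => ?_
  obtain ⟨u, hu, w, hw⟩ := hρ i hi
  exact ⟨u, hsub _ hu, w, hw⟩

/-- Theorem 2, 'if' direction: every nonblocking sub-controller of the
product of the n.m.p. controllers for `Safety(G)` and `Safety(H)` is a nonblocking
safety controller for `Safety(G ∩ H)`. -/
theorem nonblocking_sub_of_product_is_safety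
    {X U W : Type*} [Nonempty X] [Nonempty U] [Nonempty W]
    (f : X → U → W → X) (G H : Set X) (CG CH : X → Set U)
    (hG : IsNMPSafetyController f CG G) (hH : IsNMPSafetyController f CH H)
    (C : X → Set U) (hnb : Nonblocking f C)
    (hsub : ∀ x, C x ⊆ CG x ∩ CH x) :
    Nonblocking f C ∧ IsSafetyController f C (G ∩ H) := by
  have hCG := hG.2.1.mono fun x => (hsub x).trans Set.inter_subset_left
  have hCH := hH.2.1.mono fun x => (hsub x).trans Set.inter_subset_right
  exact ⟨hnb, fun ρ k h0 hρ i hi => ⟨hCG ρ k h0 hρ i hi, hCH ρ k h0 hρ i hi⟩⟩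
end

section
/- Let (X, U, W, f) be a control system and C : X → Set U any controller. Define D : X → Set U by D(x) = ⋃ { C'(x) | C' is a nonblocking sub-controller of C }. Then D is a nonblocking sub-controller of C, and every nonblocking sub-controller C' of C satisfies C' ⊑ D. Hence the largest nonblocking sub-controller of C exists and is unique. -/
/-- `D` is the largest nonblocking sub-controller of `C`: a nonblocking sub-controller
of `C` that is a super-controller of every nonblocking sub-controller of `C`. -/
def IsLargestNonblockingSub {X U W : Type*} (f : X → U → W → X)
    (C D : X → Set U) : Prop :=
  Nonblocking f D ∧ (∀ x, D x ⊆ C x) ∧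
    ∀ C' : X → Set U, Nonblocking f C' → (∀ x, C' x ⊆ C x) → ∀ x, C' x ⊆ D x

/-- the pointwise union of all nonblocking sub-controllers of `C` is a
nonblocking sub-controller of `C` dominating all of them; hence the largest nonblocking
sub-controller of `C` exists and is unique. -/
theorem largest_nonblocking_sub_exists_unique
    {X U W : Type*} [Nonempty X] [Nonempty U] [Nonempty W]
    (f : X → U → W → X) (C : X → Set U) :
    (let D : X → Set U := fun x =>
      ⋃ C' ∈ {C' : X → Set U | Nonblocking f C' ∧ ∀ y, C' y ⊆ C y}, C' x
     IsLargestNonblockingSub f C D) ∧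
    (∃! D : X → Set U, IsLargestNonblockingSub f C D) := by
  have hD : IsLargestNonblockingSub f C (fun x =>
      ⋃ C' ∈ {C' : X → Set U | Nonblocking f C' ∧ ∀ y, C' y ⊆ C y}, C' x) := by
    refine ⟨?_, ?_, ?_⟩
    · intro x _ u hu w
      -- An input allowed by the union is allowed by one of the nonblocking controllers, which
      -- keeps the successor in its own domain, a subset of the domain of the union.
      obtain ⟨C', hC', hu'⟩ := Set.mem_iUnion₂.1 hu
      obtain ⟨v, hv⟩ := hC'.1 x ⟨u, hu'⟩ u hu' w
      exact ⟨v, Set.mem_iUnion₂.2 ⟨C', hC', hv⟩⟩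
    · exact fun x => Set.iUnion₂_subset fun C' hC' => hC'.2 x
    · exact fun C' hN hS x u hu => Set.mem_iUnion₂.2 ⟨C', ⟨hN, hS⟩, hu⟩
  refine ⟨hD, _, hD, fun E hE => funext fun x => ?_⟩
  exact (hD.2.2 E hE.1 hE.2.1 x).antisymm (hE.2.2 _ hD.1 hD.2.1 x)
end

section
/- (Soundness and completeness of the controlled invariant set.) Let (X̂, Û, f̂) be a finite abstract control system and Ĝ ⊆ X̂ a safe set. Let ν be the greatest fixed point of F(S) = CPre(S) ∩ Ĝ, i.e., ν = ⋃ { S ⊆ X̂ | S ⊆ F(S) }. Then for every state x ∈ X̂: x ∈ ν if and only if there exists a nonblocking safety controller Ĉ for Safety(Ĝ) with x ∈ dom Ĉ. -/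
/-- Controllable predecessor: states from which some input surely leads into `S`. -/
def CPre {X U : Type*} (f : X → U → Set X) (S : Set X) : Set X := {x | ∃ u : U, f x u ⊆ S}

/-- `ρ 0, …, ρ k` is a finite `C`-path of the (nondeterministic) abstract system. -/
def IsFinPathA {X U : Type*} (f : X → U → Set X) (C : X → Set U) (k : ℕ) (ρ : ℕ → X) : Prop :=
  ∀ i < k, ∃ u ∈ C (ρ i), ρ (i + 1) ∈ f (ρ i) u

/-- `C` is a safety controller of the abstract system for `Safety(G)`. -/
def IsSafetyControllerA {X U : Type*} (f : X → U → Set X) (C : X → Set U) (G : Set X) : Prop :=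
  ∀ (ρ : ℕ → X) (k : ℕ), ρ 0 ∈ ctrlDom C → IsFinPathA f C k ρ → ∀ i ≤ k, ρ i ∈ G

/-- `C` is nonblocking for the abstract system. -/
def NonblockingA {X U : Type*} (f : X → U → Set X) (C : X → Set U) : Prop :=
  ∀ x ∈ ctrlDom C, ∀ u ∈ C x, f x u ⊆ ctrlDom C

/-- A nonblocking controller confines its paths to its own domain. -/
theorem IsFinPathA.mem_ctrlDom {X U : Type*} {f : X → U → Set X} {C : X → Set U} {k : ℕ}
    {ρ : ℕ → X} (hρ : IsFinPathA f C k ρ) (hC : NonblockingA f C) (h0 : ρ 0 ∈ ctrlDom C) :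
    ∀ i ≤ k, ρ i ∈ ctrlDom C := by
  intro i
  induction i with
  | zero => exact fun _ => h0
  | succ i ih =>
    intro hi
    obtain ⟨u, hu, hs⟩ := hρ i hi
    exact hC _ (ih (Nat.le_of_succ_le hi)) u hu hs

/-- a state belongs to the greatest fixed point of `S ↦ CPre S ∩ Ĝ` iff it
is in the domain of some nonblocking safety controller for `Safety(Ĝ)`. -/
theorem controlled_invariant_set_characterization
    {X U : Type*} [Finite X] [Nonempty X] [Finite U] [Nonempty U]
    (f : X → U → Set X) (G : Set X) (x : X) :
    let ν : Set X := ⋃₀ {S : Set X | S ⊆ CPre f S ∩ G}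
    (x ∈ ν ↔ ∃ C : X → Set U,
      NonblockingA f C ∧ IsSafetyControllerA f C G ∧ x ∈ ctrlDom C) := by
  intro ν
  constructor
  · rintro ⟨S, hS, hxS⟩
    let C : X → Set U := fun y => {u | y ∈ S ∧ f y u ⊆ S}
    have hdom : ctrlDom C = S := by
      ext y
      constructor
      · rintro ⟨u, hy, -⟩
        exact hy
      · intro hy
        obtain ⟨u, hu⟩ := (hS hy).1
        exact ⟨u, hy, hu⟩
    have hnb : NonblockingA f C := by
      intro y _ u hu
      rw [hdom]
      exact hu.2
    refine ⟨C, hnb, fun ρ k h0 hρ i hi => ?_, hdom ▸ hxS⟩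
    exact (hS (hdom ▸ hρ.mem_ctrlDom hnb h0 i hi)).2
  · rintro ⟨C, hnb, hsafe, hx⟩
    refine ⟨ctrlDom C, fun y hy => ⟨?_, ?_⟩, hx⟩
    · obtain ⟨u, hu⟩ := hy
      exact ⟨u, hnb y ⟨u, hu⟩ u hu⟩
    · -- The constant sequence at `y` is a path of length zero.
      exact hsafe (fun _ => y) 0 hy (fun i hi => absurd hi (Nat.not_lt_zero i)) 0 le_rfl
end

section
/- (Correctness of the controller extracted by Algorithm 1, SafetyControl.) Let (X̂, Û, f̂) be a finite abstract control system, Ĝ ⊆ X̂ a safe set, and ν the greatest fixed point of F(S) = CPre(S) ∩ Ĝ. Define the controller Ĉ* by Ĉ*(x) = {u ∈ Û | f̂(x,u) ⊆ ν} for x ∈ ν and Ĉ*(x) = ∅ otherwise. Then Ĉ* is a nonblocking safety controller for Safety(Ĝ) with dom Ĉ* = ν, and every nonblocking safety controller Ĉ for Safety(Ĝ) satisfies Ĉ ⊑ Ĉ*; i.e., Ĉ* is the nonblocking, maximally permissive safety controller for Safety(Ĝ). -/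
/-- the controller extracted by Algorithm 1 from the greatest fixed point
`ν` of `S ↦ CPre S ∩ Ĝ` (allowing exactly the inputs keeping the system in `ν`, on `ν`,
and nothing elsewhere) is the nonblocking, maximally permissive safety controller for
`Safety(Ĝ)`, and its domain is `ν`. -/
theorem extracted_controller_is_nmp
    {X U : Type*} [Finite X] [Nonempty X] [Finite U] [Nonempty U]
    (f : X → U → Set X) (G : Set X) :
    let ν : Set X := ⋃₀ {S : Set X | S ⊆ CPre f S ∩ G}
    let Cstar : X → Set U := fun x => {u : U | x ∈ ν ∧ f x u ⊆ ν}
    NonblockingA f Cstar ∧ IsSafetyControllerA f Cstar G ∧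
      ctrlDom Cstar = ν ∧
      ∀ C : X → Set U, NonblockingA f C → IsSafetyControllerA f C G →
        ∀ x, C x ⊆ Cstar x := by
  intro ν Cstar
  have hpost : ν ⊆ CPre f ν ∩ G := by
    rintro x ⟨S, hS, hx⟩
    obtain ⟨⟨u, hu⟩, hG⟩ := hS hx
    exact ⟨⟨u, hu.trans (Set.subset_sUnion_of_mem hS)⟩, hG⟩
  have hdom : ctrlDom Cstar = ν := by
    ext x
    constructor
    · rintro ⟨u, hx, -⟩
      exact hx
    · intro hx
      obtain ⟨u, hu⟩ := (hpost hx).1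
      exact ⟨u, hx, hu⟩
  refine ⟨?_, ?_, hdom, ?_⟩
  · intro x _ u hu
    rw [hdom]
    exact hu.2
  · intro ρ k h0 hρ i hi
    have hν : ∀ i ≤ k, ρ i ∈ ν := by
      intro i
      induction i with
      | zero => exact fun _ => hdom ▸ h0
      | succ i _ =>
        intro hi
        obtain ⟨u, hu, hstep⟩ := hρ i hi
        exact hu.2 hstep
    exact (hpost (hν i hi)).2
  · intro C hNB hSafe x u hu
    have hC : ctrlDom C ⊆ ν := by
      refine Set.subset_sUnion_of_mem (show ctrlDom C ⊆ CPre f (ctrlDom C) ∩ G from ?_)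
      rintro y ⟨v, hv⟩
      refine ⟨⟨v, hNB y ⟨v, hv⟩ v hv⟩, ?_⟩
      -- The path of length zero at `y` already forces `y ∈ G`.
      exact hSafe (fun _ => y) 0 ⟨v, hv⟩ (fun i hi => absurd hi (Nat.not_lt_zero i)) 0 le_rfl
    exact ⟨hC ⟨u, hu⟩, (hNB x ⟨u, hu⟩ u hu).trans hC⟩
end

section
/- (Correctness of Algorithm 2, NBControl.) Let (X̂, Û, f̂) be a finite abstract control system and Ĉ : X̂ → Set Û a controller. Define a new system on the state set Option X̂ (X̂ extended with a sink state ⊥ = none) with transition function f' given by: f'(some x, u) = {some y | y ∈ f̂(x,u)} if u ∈ Ĉ(x); f'(some x, u) = {none} if u ∉ Ĉ(x); and f'(none, u) = {none} for all u. Suppose Ĉ' : Option X̂ → Set Û is a nonblocking, maximally permissive safety controller of this new system for the safe set {some x | x ∈ X̂}. Then the controller D : X̂ → Set Û defined by D(x) = Ĉ'(some x) is the largest nonblocking sub-controller of Ĉ with respect to (X̂, Û, f̂): D ⊑ Ĉ, D is nonblocking, and every nonblocking sub-controller E of Ĉ satisfies E ⊑ D. -/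
/-- The extended system of Algorithm 2 (NBControl): transitions allowed by `C` are kept
(with states embedded via `some`), all other transitions are redirected to the sink
state `none`, which is absorbing. -/
def extTrans {X U : Type*} (f : X → U → Set X) (C : X → Set U) :
    Option X → U → Set (Option X) :=
  fun ox u =>
    match ox with
    | some x => {oy | (u ∈ C x ∧ ∃ y ∈ f x u, oy = some y) ∨ (u ∉ C x ∧ oy = none)}
    | none => {none}

/-- Extension of a controller to the state set with a sink, allowing no input at the sink. -/
def extCtrl {X U : Type*} (E : X → Set U) : Option X → Set U
  | some x => E x
  | none => ∅

/-- The states of a path of a nonblocking controller never leave its domain, so such a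
controller is safe as soon as its domain consists of safe states. -/
theorem safety_of_nonblocking {X U : Type*} {f : X → U → Set X} {C : X → Set U} {G : Set X}
    (hnb : NonblockingA f C) (hG : ctrlDom C ⊆ G) : IsSafetyControllerA f C G := by
  intro ρ k h0 hρ i hi
  apply hG
  induction i with
  | zero => exact h0
  | succ i ih =>
    obtain ⟨u, hu, hy⟩ := hρ i hi
    exact hnb _ (ih (Nat.le_of_succ_le hi)) u hu hy

theorem ctrlDom_extCtrl_subset {X U : Type*} {E : X → Set U} :
    ctrlDom (extCtrl E) ⊆ {oy : Option X | ∃ x : X, oy = some x} := by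
  rintro (_ | x) ⟨u, hu⟩
  · exact hu.elim
  · exact ⟨x, rfl⟩

theorem nonblocking_extCtrl {X U : Type*} {f : X → U → Set X} {C E : X → Set U}
    (hE : NonblockingA f E) (hEC : ∀ x, E x ⊆ C x) :
    NonblockingA (extTrans f C) (extCtrl E) := by
  rintro (_ | x) _ u hu oy hoy
  · exact hu.elim
  · rcases hoy with ⟨_, y, hy, rfl⟩ | ⟨hC, _⟩
    · exact hE x ⟨u, hu⟩ u hu hy
    · exact (hC (hEC x hu)).elim

/-- correctness of Algorithm 2, NBControl: if `C'` is the nonblocking,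
maximally permissive safety controller of the extended system for the safe set of
non-sink states, then `x ↦ C' (some x)` is the largest nonblocking sub-controller
of `C`. -/
theorem nbcontrol_correct
    {X U : Type*} [Finite X] [Nonempty X] [Finite U] [Nonempty U]
    (f : X → U → Set X) (C : X → Set U) (C' : Option X → Set U)
    (hnb : NonblockingA (extTrans f C) C')
    (hsafe : IsSafetyControllerA (extTrans f C) C' {oy : Option X | ∃ x : X, oy = some x})
    (hmax : ∀ E : Option X → Set U, NonblockingA (extTrans f C) E →
      IsSafetyControllerA (extTrans f C) E {oy : Option X | ∃ x : X, oy = some x} →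
      ∀ ox, E ox ⊆ C' ox) :
    let D : X → Set U := fun x => C' (some x)
    NonblockingA f D ∧ (∀ x, D x ⊆ C x) ∧
      ∀ E : X → Set U, NonblockingA f E → (∀ x, E x ⊆ C x) → ∀ x, E x ⊆ D x := by
  intro D
  have hnone : none ∉ ctrlDom C' := fun h => by
    -- Safety on the length-zero path already places every domain state in the safe set.
    obtain ⟨x, hx⟩ := hsafe (fun _ => none) 0 h (fun i hi => absurd hi (Nat.not_lt_zero i))
      0 le_rfl
    cases hx
  have hsub : ∀ x, D x ⊆ C x := fun x u hu => by
    by_contra hC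
    exact hnone (hnb (some x) ⟨u, hu⟩ u hu (Or.inr ⟨hC, rfl⟩))
  refine ⟨fun x _ u hu y hy => ?_, hsub, fun E hE hEC x => ?_⟩
  · exact hnb (some x) ⟨u, hu⟩ u hu (Or.inl ⟨hsub x hu, y, hy, rfl⟩)
  · have hnb' := nonblocking_extCtrl hE hEC
    exact hmax (extCtrl E) hnb' (safety_of_nonblocking hnb' ctrlDom_extCtrl_subset) (some x)
end

section
/- (Soundness of controller refinement in abstraction-based control.) Let (X, Û, W, f) be a control system, (X̂, Û, f̂) an abstract control system with the same input set, and Q : X → X̂ a feedback refinement relation (Q(f(x,u,w)) ∈ f̂(Q(x),u) for all x, u, w). Let Ĝ ⊆ X̂ and G ⊆ X satisfy Q⁻¹(Ĝ) ⊆ G, and let Ĉ be a safety controller of the abstract system for Safety(Ĝ). Then the refined controller C : X → Set Û defined by C(x) = Ĉ(Q(x)) is a safety controller of the concrete system for Safety(G); moreover, if Ĉ is nonblocking (for every x̂ ∈ dom Ĉ and u ∈ Ĉ(x̂), f̂(x̂,u) ⊆ dom Ĉ) then C is nonblocking (for every x ∈ dom C, u ∈ C(x), w ∈ W, f(x,u,w)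 ∈ dom C). -/
/-- soundness of controller refinement in abstraction-based control: if
`Q` is a feedback refinement relation, `Q⁻¹(Ĝ) ⊆ G`, and `Ĉ` is a safety controller of
the abstract system for `Safety(Ĝ)`, then the refined controller `x ↦ Ĉ (Q x)` is a
safety controller of the concrete system for `Safety(G)`; moreover it is nonblocking
whenever `Ĉ` is. -/
theorem frr_refinement_sound
    {X XA U W : Type*} [Nonempty X] [Nonempty XA] [Nonempty U] [Nonempty W]
    (f : X → U → W → X) (fA : XA → U → Set XA) (Q : X → XA)
    (hQ : ∀ (x : X) (u : U) (w : W), Q (f x u w) ∈ fA (Q x) u)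
    (GA : Set XA) (G : Set X) (hG : Q ⁻¹' GA ⊆ G)
    (CA : XA → Set U) (hsafe : IsSafetyControllerA fA CA GA) :
    IsSafetyController f (fun x => CA (Q x)) G ∧
      (NonblockingA fA CA → Nonblocking f (fun x => CA (Q x))) := by
  refine ⟨fun ρ k h0 hρ i hi => hG ?_, fun h x hx u hu w => h (Q x) hx u hu (hQ x u w)⟩
  -- `Q` maps a path of the refined controller to an abstract path with the same inputs.
  refine hsafe (fun j => Q (ρ j)) k h0 (fun j hj => ?_) i hi
  obtain ⟨u, hu, w, hw⟩ := hρ j hj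
  refine ⟨u, hu, ?_⟩
  change Q (ρ (j + 1)) ∈ fA (Q (ρ j)) u
  rw [hw]
  exact hQ _ _ _
end
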